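/- Let λ > 0 and let φ : ℝ² → ℝ be a smooth function satisfying Δφ = −λφ on all of ℝ², where Δ is the Euclidean Laplacian. Then for every x ∈ ℝ² and every t ≥ 0, ∫₀^t ( (1/(2π)) ∫_{B(x, t−s)} φ(y)/√((t−s)² − ‖y−x‖²) dy ) ds = ((1 − cos(√λ · t))/λ) · φ(x), where the inner integral is over the open disk B(x, t−s) ⊂ ℝ². -/

import Mathlib

open scoped Real
open MeasureTheory

/-- The Euclidean Laplacian `Δf(x) = Σᵢ ∂²f/∂xᵢ²(x)` of `f : ℝ^d → ℝ`. -/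
noncomputable def euclidLaplacian {d : ℕ} (f : EuclideanSpace ℝ (Fin d) → ℝ)
    (x : EuclideanSpace ℝ (Fin d)) : ℝ :=
  ∑ i, fderiv ℝ (fun y => fderiv ℝ f y (EuclideanSpace.single i 1)) x (EuclideanSpace.single i 1)

/-!
Let `M r` be the mean of `φ` over the circle of radius `r` about `x`. In polar coordinates the inner
integral is the Abel transform `U τ = ∫₀^τ r M(r) / √(τ² - r²) dr`. The Darboux equation
`M'' + M' / r = mean of Δφ` becomes `U'' = Abel transform of the mean of Δφ` under this transform.
For `Δφ = -λφ` the right-hand side is `-λ U`, and `U 0 = 0`, `U' 0 = M 0 = φ x`, so `U` is the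
harmonic oscillation `sin (√λ τ) / √λ • φ x`, whose integral over `[0, t]` is the asserted value.
-/

section

open Set Real
open scoped Laplacian

variable {E : Type*} [NormedAddCommGroup E] [NormedSpace ℝ E]

/-! ### Interval integrals depending on a parameter -/

theorem hasDerivAt_curry_left {F : ℝ → ℝ → E} {r θ : ℝ}
    (hF : DifferentiableAt ℝ (Function.uncurry F) (r, θ)) :
    HasDerivAt (F · θ) (fderiv ℝ (Function.uncurry F) (r, θ) (1, 0)) r :=
  hF.hasFDerivAt.comp_hasDerivAt_of_eq r ((hasDerivAt_id r).prodMk (hasDerivAt_const r θ)) rfl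

theorem hasDerivAt_intervalIntegral_of_contDiff {F : ℝ → ℝ → E}
    (hF : ContDiff ℝ 1 (Function.uncurry F)) (a b r : ℝ) :
    HasDerivAt (fun r ↦ ∫ θ in a..b, F r θ) (∫ θ in a..b, deriv (F · θ) r) r := by
  have hF_slice (r : ℝ) : Continuous (F r) := hF.continuous.comp (Continuous.prodMk_right r)
  have hF_deriv (r θ : ℝ) := hasDerivAt_curry_left (hF.differentiable one_ne_zero (r, θ))
  have hF'_cont : Continuous fun p : ℝ × ℝ ↦ fderiv ℝ (Function.uncurry F) p (1, 0) :=
    (hF.continuous_fderiv one_ne_zero).clm_apply continuous_const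
  obtain ⟨C, hC⟩ := ((isCompact_closedBall r 1).prod isCompact_uIcc)
    |>.exists_bound_of_continuousOn hF'_cont.continuousOn
  simp only [(hF_deriv _ _).deriv]
  exact (intervalIntegral.hasDerivAt_integral_of_dominated_loc_of_deriv_le
    (F' := fun r θ ↦ fderiv ℝ (Function.uncurry F) (r, θ) (1, 0)) (bound := fun _ ↦ C)
    (Metric.closedBall_mem_nhds r one_pos)
    (.of_forall fun r ↦ (hF_slice r).aestronglyMeasurable)
    ((hF_slice r).intervalIntegrable a b)
    (hF'_cont.comp (Continuous.prodMk_right r)).aestronglyMeasurable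
    (.of_forall fun θ hθ s hs ↦ hC (s, θ) ⟨hs, uIoc_subset_uIcc hθ⟩)
    intervalIntegrable_const (.of_forall fun θ _ s _ ↦ hF_deriv s θ)).2

theorem contDiff_intervalIntegral {F : ℝ → ℝ → E} {n : ℕ}
    (hF : ContDiff ℝ n (Function.uncurry F)) (a b : ℝ) :
    ContDiff ℝ n fun r ↦ ∫ θ in a..b, F r θ := by
  induction n generalizing F with
  | zero =>
    exact contDiff_zero.2 (intervalIntegral.continuous_parametric_intervalIntegral_of_continuous'
      hF.continuous a b)
  | succ n ih =>
    rw [Nat.cast_add, Nat.cast_one] at hF ⊢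
    have h_deriv := hasDerivAt_intervalIntegral_of_contDiff (hF.of_le (by simp)) a b
    have hF' : ContDiff ℝ n (Function.uncurry fun r θ ↦ deriv (F · θ) r) := by
      have hF'_eq : (Function.uncurry fun r θ ↦ deriv (F · θ) r) =
          fun p ↦ fderiv ℝ (Function.uncurry F) p (1, 0) :=
        funext fun p ↦ (hasDerivAt_curry_left (hF.differentiable (by simp) p)).deriv
      rw [hF'_eq]
      exact (hF.fderiv_right le_rfl).clm_apply contDiff_const
    rw [contDiff_succ_iff_deriv, funext fun r ↦ (h_deriv r).deriv]
    exact ⟨fun r ↦ (h_deriv r).differentiableAt, by simp, ih hF'⟩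

theorem eq_cos_smul_add_sin_smul_of_hasDerivAt {ω : ℝ} (hω : ω ≠ 0) {u v : ℝ → E}
    (hu : ∀ t, HasDerivAt u (v t) t) (hv : ∀ t, HasDerivAt v (-ω ^ 2 • u t) t) (t : ℝ) :
    u t = cos (ω * t) • u 0 + (sin (ω * t) / ω) • v 0 := by
  have hcos (t : ℝ) : HasDerivAt (fun t ↦ cos (ω * t)) (-sin (ω * t) * ω) t := by
    simpa using ((hasDerivAt_id t).const_mul ω).cos
  have hsin (t : ℝ) : HasDerivAt (fun t ↦ sin (ω * t)) (cos (ω * t) * ω) t := by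
    simpa using ((hasDerivAt_id t).const_mul ω).sin
  -- Turning the phase point `(u, v)` back by the angle `ω t` gives two conserved quantities.
  have hposition (t : ℝ) :
      HasDerivAt (fun t ↦ cos (ω * t) • u t - (sin (ω * t) / ω) • v t) 0 t := by
    refine (((hcos t).smul (hu t)).sub (((hsin t).div_const ω).smul (hv t))).congr_deriv ?_
    match_scalars <;> field_simp <;> ring
  have hvelocity (t : ℝ) :
      HasDerivAt (fun t ↦ (ω * sin (ω * t)) • u t + cos (ω * t) • v t) 0 t := by
    refine ((((hsin t).const_mul ω).smul (hu t)).add ((hcos t).smul (hv t))).congr_deriv ?_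
    module
  have hu₀ := is_const_of_deriv_eq_zero (fun t ↦ (hposition t).differentiableAt)
    (fun t ↦ (hposition t).deriv) t 0
  have hv₀ := is_const_of_deriv_eq_zero (fun t ↦ (hvelocity t).differentiableAt)
    (fun t ↦ (hvelocity t).deriv) t 0
  simp only [mul_zero, cos_zero, sin_zero, zero_div, one_smul, zero_smul, sub_zero,
    zero_add] at hu₀ hv₀
  rw [← hu₀, ← hv₀]
  match_scalars <;> field_simp <;> linarith [sin_sq_add_cos_sq (ω * t)]

/-! ### The Abel transform -/

/-- The Abel transform `t ↦ ∫₀ᵗ r g(r) / √(t² - r²) dr`, which turns circle means into solutions of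
the planar wave equation. It is written in the variable `α` with `r = t sin α`, which removes the
singularity of the kernel and makes the transform a smooth function of all real `t`. -/
noncomputable def abelTransform (g : ℝ → E) (t : ℝ) : E :=
  t • ∫ α in 0..π / 2, sin α • g (t * sin α)

theorem abelTransform_zero (g : ℝ → E) : abelTransform g 0 = 0 :=
  zero_smul ℝ _

theorem abelTransform_const_smul (c : ℝ) (g : ℝ → E) :
    abelTransform (c • g) = c • abelTransform g := by
  ext t
  simp only [abelTransform, Pi.smul_apply, smul_comm _ c, intervalIntegral.integral_smul]

theorem integral_sqrt_sub_sq_eq_abelTransform (g : ℝ → E) {τ : ℝ} (hτ : 0 < τ) :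
    ∫ r in 0..τ, (r / √(τ ^ 2 - r ^ 2)) • g r = abelTransform g τ := by
  have hcos_pos {α : ℝ} (hα : α ∈ Ioo 0 (π / 2)) : 0 < cos α :=
    cos_pos_of_mem_Ioo ⟨by linarith [hα.1, pi_pos], hα.2⟩
  have hjacobian {α : ℝ} (hα : α ∈ Ioo 0 (π / 2)) :
      τ * cos α * (τ * sin α / √(τ ^ 2 - (τ * sin α) ^ 2)) = τ * sin α := by
    have hpythagoras : τ ^ 2 - (τ * sin α) ^ 2 = (τ * cos α) ^ 2 := by
      rw [mul_pow, mul_pow, cos_sq']; ring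
    have hτcos : 0 < τ * cos α := mul_pos hτ (hcos_pos hα)
    rw [hpythagoras, sqrt_sq hτcos.le, mul_div_cancel₀ _ hτcos.ne']
  have hsubst := intervalIntegral.integral_deriv_smul_comp_of_deriv_nonneg
    (f := fun α ↦ τ * sin α) (f' := fun α ↦ τ * cos α) (a := 0) (b := π / 2)
    (g := fun r ↦ (r / √(τ ^ 2 - r ^ 2)) • g r) (by fun_prop)
    (fun α _ ↦ (hasDerivAt_sin α).const_mul τ) (fun α hα ↦ by
      rw [min_eq_left pi_div_two_pos.le, max_eq_right pi_div_two_pos.le] at hα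
      exact (mul_pos hτ (hcos_pos hα)).le)
  simp only [sin_zero, mul_zero, sin_pi_div_two, mul_one, Function.comp_apply] at hsubst
  rw [← hsubst, abelTransform, ← intervalIntegral.integral_smul,
    intervalIntegral.integral_of_le pi_div_two_pos.le,
    intervalIntegral.integral_of_le pi_div_two_pos.le,
    integral_Ioc_eq_integral_Ioo, integral_Ioc_eq_integral_Ioo]
  refine setIntegral_congr_fun measurableSet_Ioo fun α hα ↦ ?_
  simp only [smul_smul, hjacobian hα]

theorem integrableOn_div_sqrt_sub_sq (τ : ℝ) :
    IntegrableOn (fun r ↦ r / √(τ ^ 2 - r ^ 2)) (Ioo 0 τ) := by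
  refine (intervalIntegral.integrableOn_deriv_of_nonneg (g := fun r ↦ -√(τ ^ 2 - r ^ 2))
    (by fun_prop) (fun r hr ↦ ?_) fun r hr ↦ div_nonneg hr.1.le (sqrt_nonneg _)).mono_set
    Ioo_subset_Ioc_self
  have : τ ^ 2 - r ^ 2 ≠ 0 := by nlinarith [hr.1, hr.2]
  convert! (((hasDerivAt_pow 2 r).const_sub (τ ^ 2)).sqrt this).neg using 1
  simp only [Nat.cast_ofNat, Nat.add_one_sub_one, pow_one]
  field

theorem integral_sin_smul_comp_mul_sin [CompleteSpace E] {g : ℝ → E} (hg : ContDiff ℝ 1 g)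
    (t : ℝ) :
    ∫ α in 0..π / 2, sin α • g (t * sin α) =
      g 0 + t • ∫ α in 0..π / 2, cos α ^ 2 • deriv g (t * sin α) := by
  have : Continuous (deriv g) := hg.continuous_deriv le_rfl
  have hcomp (α : ℝ) :
      HasDerivAt (fun α ↦ g (t * sin α)) ((t * cos α) • deriv g (t * sin α)) α :=
    (hg.differentiable one_ne_zero _).hasDerivAt.scomp α ((hasDerivAt_sin α).const_mul t)
  have hparts := intervalIntegral.integral_smul_deriv_eq_deriv_smul
    (u := cos) (u' := fun α ↦ -sin α) (v := fun α ↦ g (t * sin α)) (a := 0) (b := π / 2)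
    (fun α _ ↦ hasDerivAt_cos α) (fun α _ ↦ hcomp α)
    (Continuous.intervalIntegrable (by fun_prop) _ _)
    (Continuous.intervalIntegrable (by fun_prop) _ _)
  simp only [cos_pi_div_two, cos_zero, sin_zero, mul_zero, zero_smul, one_smul, zero_sub, neg_smul,
    intervalIntegral.integral_neg, sub_neg_eq_add] at hparts
  rw [← intervalIntegral.integral_smul, ← sub_eq_iff_eq_add', ← neg_add_eq_sub, ← hparts]
  congr! 2 with α
  module

theorem hasDerivAt_abelTransform [CompleteSpace E] {g : ℝ → E} (hg : ContDiff ℝ 1 g) (t : ℝ) :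
    HasDerivAt (abelTransform g) (g 0 + t • ∫ α in 0..π / 2, deriv g (t * sin α)) t := by
  have : Continuous (deriv g) := hg.continuous_deriv le_rfl
  have hslice (α : ℝ) : deriv (fun t ↦ sin α • g (t * sin α)) t =
      sin α ^ 2 • deriv g (t * sin α) := by
    have := (hg.differentiable one_ne_zero _).hasDerivAt.scomp t (hasDerivAt_mul_const (sin α))
    simpa [smul_smul, sq] using! (this.const_smul (sin α)).deriv
  have hintegral := hasDerivAt_intervalIntegral_of_contDiff
    (F := fun t α ↦ sin α • g (t * sin α)) (by unfold Function.uncurry; fun_prop) 0 (π / 2) t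
  refine ((hasDerivAt_id t).smul hintegral).congr_deriv ?_
  simp only [hslice, id, one_smul]
  rw [integral_sin_smul_comp_mul_sin hg, add_left_comm, ← smul_add,
    ← intervalIntegral.integral_add (Continuous.intervalIntegrable (by fun_prop) _ _)
      (Continuous.intervalIntegrable (by fun_prop) _ _)]
  simp only [← add_smul, sin_sq_add_cos_sq, one_smul]

/-- Together with `hasDerivAt_abelTransform`: the Abel transform intertwines the radial operator
`g'' + g' / r` with `d²/dt²`. -/
theorem hasDerivAt_smul_integral_deriv_comp_mul_sin {g h : ℝ → E}
    (hg : ContDiff ℝ 2 g) (hgh : ∀ r, r • deriv (deriv g) r + deriv g r = r • h r) (t : ℝ) :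
    HasDerivAt (fun t ↦ t • ∫ α in 0..π / 2, deriv g (t * sin α)) (abelTransform h t) t := by
  have hg' : ContDiff ℝ 1 (deriv g) := ContDiff.deriv' hg
  have : Continuous (deriv (deriv g)) := hg'.continuous_deriv le_rfl
  have hslice (α : ℝ) : deriv (fun t ↦ deriv g (t * sin α)) t =
      sin α • deriv (deriv g) (t * sin α) :=
    ((hg'.differentiable one_ne_zero _).hasDerivAt.scomp t (hasDerivAt_mul_const (sin α))).deriv
  have hintegral := hasDerivAt_intervalIntegral_of_contDiff
    (F := fun t α ↦ deriv g (t * sin α)) (by unfold Function.uncurry; fun_prop) 0 (π / 2) t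
  refine ((hasDerivAt_id t).smul hintegral).congr_deriv ?_
  simp only [hslice, id, one_smul, abelTransform]
  rw [← intervalIntegral.integral_smul, ← intervalIntegral.integral_smul,
    ← intervalIntegral.integral_add (Continuous.intervalIntegrable (by fun_prop) _ _)
      (Continuous.intervalIntegrable (by fun_prop) _ _)]
  simp only [smul_smul, hgh]

/-! ### Circle means -/

theorem contDiff_uncurry_circleMap (c : ℂ) {n : WithTop ℕ∞} :
    ContDiff ℝ n (Function.uncurry (circleMap c)) :=
  contDiff_const.add ((Complex.ofRealCLM.contDiff.comp contDiff_fst).mul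
    ((Complex.ofRealCLM.contDiff.comp contDiff_snd).mul contDiff_const).cexp)

theorem hasDerivAt_circleMap_radius (c : ℂ) (r θ : ℝ) :
    HasDerivAt (circleMap c · θ) (circleMap 0 1 θ) r := by
  simpa [circleMap] using! ((hasDerivAt_id r).ofReal_comp.mul_const _).const_add c

theorem contDiff_circleAverage {f : ℂ → E} {n : ℕ} (hf : ContDiff ℝ n f) (c : ℂ) :
    ContDiff ℝ n (circleAverage f c) :=
  contDiff_const.smul (contDiff_intervalIntegral (hf.comp (contDiff_uncurry_circleMap c)) 0 (2 * π))

theorem deriv_circleAverage {f : ℂ → E} (hf : ContDiff ℝ 1 f) (c : ℂ) (r : ℝ) :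
    deriv (circleAverage f c) r =
      (2 * π)⁻¹ • ∫ θ in 0..2 * π, fderiv ℝ f (circleMap c r θ) (circleMap 0 1 θ) := by
  have hslice (θ : ℝ) : deriv (fun r ↦ f (circleMap c r θ)) r =
      fderiv ℝ f (circleMap c r θ) (circleMap 0 1 θ) :=
    ((hf.differentiable one_ne_zero _).hasFDerivAt.comp_hasDerivAt r
      (hasDerivAt_circleMap_radius c r θ)).deriv
  simp only [← hslice]
  exact ((hasDerivAt_intervalIntegral_of_contDiff (F := fun r θ ↦ f (circleMap c r θ))
    (hf.comp (contDiff_uncurry_circleMap c)) 0 (2 * π) r).const_smul _).deriv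

theorem deriv_deriv_circleAverage {f : ℂ → E} (hf : ContDiff ℝ 2 f) (c : ℂ) (r : ℝ) :
    deriv (deriv (circleAverage f c)) r = (2 * π)⁻¹ • ∫ θ in 0..2 * π,
      fderiv ℝ (fderiv ℝ f) (circleMap c r θ) (circleMap 0 1 θ) (circleMap 0 1 θ) := by
  have hDf : ContDiff ℝ 1 (fderiv ℝ f) := hf.fderiv_right (by norm_num)
  have hslice (θ : ℝ) :
      deriv (fun r ↦ fderiv ℝ f (circleMap c r θ) (circleMap 0 1 θ)) r =
        fderiv ℝ (fderiv ℝ f) (circleMap c r θ) (circleMap 0 1 θ) (circleMap 0 1 θ) := by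
    simpa using! (((hDf.differentiable one_ne_zero _).hasFDerivAt.comp_hasDerivAt r
      (hasDerivAt_circleMap_radius c r θ)).clm_apply (hasDerivAt_const r (circleMap 0 1 θ))).deriv
  have hsmooth : ContDiff ℝ 1 (Function.uncurry fun r θ ↦
      fderiv ℝ f (circleMap c r θ) (circleMap 0 1 θ)) :=
    (hDf.comp (contDiff_uncurry_circleMap c)).clm_apply
      ((contDiff_uncurry_circleMap 0).comp (contDiff_const.prodMk contDiff_snd))
  simp only [← hslice, funext (deriv_circleAverage (hf.of_le one_le_two) c)]
  exact ((hasDerivAt_intervalIntegral_of_contDiff hsmooth 0 (2 * π) r).const_smul _).deriv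

theorem integral_fderiv_fderiv_tangent_sub [CompleteSpace E] {f : ℂ → E} (hf : ContDiff ℝ 2 f)
    (c : ℂ) (r : ℝ) :
    ∫ θ in 0..2 * π, (r • fderiv ℝ (fderiv ℝ f) (circleMap c r θ)
        (circleMap 0 1 θ * Complex.I) (circleMap 0 1 θ * Complex.I) -
      fderiv ℝ f (circleMap c r θ) (circleMap 0 1 θ)) = 0 := by
  have hDf : ContDiff ℝ 1 (fderiv ℝ f) := hf.fderiv_right (by norm_num)
  have : Continuous (fderiv ℝ (fderiv ℝ f)) := hDf.continuous_fderiv one_ne_zero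
  have hderiv (θ : ℝ) : HasDerivAt
      (fun θ ↦ fderiv ℝ f (circleMap c r θ) (circleMap 0 1 θ * Complex.I))
      (r • fderiv ℝ (fderiv ℝ f) (circleMap c r θ)
        (circleMap 0 1 θ * Complex.I) (circleMap 0 1 θ * Complex.I) -
      fderiv ℝ f (circleMap c r θ) (circleMap 0 1 θ)) θ := by
    have hr : circleMap 0 r θ * Complex.I = r • (circleMap 0 1 θ * Complex.I) := by
      simp [circleMap, mul_assoc]
    refine (((hDf.differentiable one_ne_zero _).hasFDerivAt.comp_hasDerivAt θ
      (hasDerivAt_circleMap c r θ)).clm_apply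
      ((hasDerivAt_circleMap 0 1 θ).mul_const Complex.I)).congr_deriv ?_
    rw [hr, map_smul, mul_assoc (circleMap 0 1 θ), Complex.I_mul_I, mul_neg_one, map_neg]
    exact (sub_eq_add_neg _ _).symm
  rw [intervalIntegral.integral_eq_sub_of_hasDerivAt (fun θ _ ↦ hderiv θ)
    (Continuous.intervalIntegrable (by fun_prop) _ _)]
  simp [circleMap]

theorem laplacian_eq_fderiv_radial_add_tangent (f : ℂ → E) (z : ℂ) (θ : ℝ) :
    Δ f z = fderiv ℝ (fderiv ℝ f) z (circleMap 0 1 θ) (circleMap 0 1 θ) +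
      fderiv ℝ (fderiv ℝ f) z (circleMap 0 1 θ * Complex.I) (circleMap 0 1 θ * Complex.I) := by
  rw [InnerProductSpace.laplacian_eq_iteratedFDeriv_orthonormalBasis f
    (Complex.orthonormalBasisOneI.map (rotation (Circle.exp θ)))]
  simp [iteratedFDeriv_two_apply, circleMap]

/-- The Euler–Poisson–Darboux equation for circle means, multiplied by `r` to include `r = 0`. -/
theorem smul_deriv_deriv_circleAverage_add_deriv [CompleteSpace E] {f : ℂ → E}
    (hf : ContDiff ℝ 2 f) (c : ℂ) (r : ℝ) :
    r • deriv (deriv (circleAverage f c)) r + deriv (circleAverage f c) r =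
      r • circleAverage (Δ f) c r := by
  have hDf : ContDiff ℝ 1 (fderiv ℝ f) := hf.fderiv_right (by norm_num)
  have : Continuous (fderiv ℝ (fderiv ℝ f)) := hDf.continuous_fderiv one_ne_zero
  have hradial : IntervalIntegrable (fun θ ↦ r • fderiv ℝ (fderiv ℝ f) (circleMap c r θ)
      (circleMap 0 1 θ) (circleMap 0 1 θ)) volume 0 (2 * π) :=
    Continuous.intervalIntegrable (by fun_prop) _ _
  -- The added integral vanishes because its integrand is a derivative in `θ`; it completes the
  -- second radial derivative to the Laplacian.
  rw [deriv_deriv_circleAverage hf, deriv_circleAverage (hf.of_le one_le_two), circleAverage,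
    smul_comm r, smul_comm r, ← smul_add, ← intervalIntegral.integral_smul,
    ← intervalIntegral.integral_smul,
    ← intervalIntegral.integral_add hradial (Continuous.intervalIntegrable (by fun_prop) _ _),
    ← add_zero (∫ θ in 0..2 * π, _), ← integral_fderiv_fderiv_tangent_sub hf c r,
    ← intervalIntegral.integral_add (Continuous.intervalIntegrable (by fun_prop) _ _)
      (Continuous.intervalIntegrable (by fun_prop) _ _)]
  congr! 3 with θ
  rw [laplacian_eq_fderiv_radial_add_tangent f _ θ, smul_add]
  abel

/-! ### Poisson's integral on the plane -/

theorem setIntegral_ball_eq_integral_circleMap (f : ℂ → E) (c : ℂ) (τ : ℝ) :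
    ∫ z in Metric.ball c τ, f z =
      ∫ p in Ioo 0 τ ×ˢ Ioo (-π) π, p.1 • f (circleMap c p.1 p.2) := by
  have hpolar (p : ℝ × ℝ) (hp : p ∈ polarCoord.target) :
      p.1 • (Metric.ball c τ).indicator f (c + Complex.polarCoord.symm p) =
        (Iio τ ×ˢ univ).indicator (fun p : ℝ × ℝ ↦ p.1 • f (circleMap c p.1 p.2)) p := by
    have hcircle : c + Complex.polarCoord.symm p = circleMap c p.1 p.2 := by
      rw [Complex.polarCoord_symm_apply, Complex.ofReal_cos, Complex.ofReal_sin,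
        ← Complex.exp_mul_I, circleMap]
    have hmem : circleMap c p.1 p.2 ∈ Metric.ball c τ ↔ p ∈ Iio τ ×ˢ univ := by
      rw [mem_ball_iff_norm, circleMap_sub_center, norm_circleMap_zero, abs_of_pos hp.1]
      simp
    by_cases h : p ∈ Iio τ ×ˢ univ
    · rw [hcircle, indicator_of_mem (hmem.2 h), indicator_of_mem h]
    · rw [hcircle, indicator_of_notMem (mt hmem.1 h), indicator_of_notMem h, smul_zero]
  rw [← integral_indicator Metric.isOpen_ball.measurableSet,
    ← integral_add_left_eq_self _ c, ← Complex.integral_comp_polarCoord_symm,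
    setIntegral_congr_fun polarCoord.open_target.measurableSet hpolar,
    setIntegral_indicator (measurableSet_Iio.prod .univ), polarCoord_target, prod_inter_prod,
    Ioi_inter_Iio, inter_univ]

theorem integral_circleMap_eq_circleAverage (f : ℂ → E) (c : ℂ) (r : ℝ) :
    ∫ θ in Ioo (-π) π, f (circleMap c r θ) = (2 * π) • circleAverage f c r := by
  rw [circleAverage_eq_integral_add (-π), smul_inv_smul₀ two_pi_pos.ne',
    intervalIntegral.integral_comp_add_right (fun θ ↦ f (circleMap c r θ)),
    intervalIntegral.integral_of_le (by linarith [pi_pos]), integral_Ioc_eq_integral_Ioo]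
  congr 3 <;> ring

theorem setIntegral_ball_norm_sub_smul {k : ℝ → ℝ} {f : ℂ → E} {τ : ℝ}
    (hk : IntegrableOn (fun r ↦ r * k r) (Ioo 0 τ)) (hf : Continuous f) (c : ℂ) :
    ∫ z in Metric.ball c τ, k ‖z - c‖ • f z =
      (2 * π) • ∫ r in Ioo 0 τ, (r * k r) • circleAverage f c r := by
  have hcont : Continuous fun p : ℝ × ℝ ↦ f (circleMap c p.1 p.2) := by fun_prop
  obtain ⟨C, hC⟩ := ((isCompact_Icc (a := 0) (b := τ)).prod (isCompact_Icc (a := -π) (b := π)))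
    |>.exists_bound_of_continuousOn hcont.continuousOn
  have hpolar : EqOn (fun p : ℝ × ℝ ↦ p.1 • k ‖circleMap c p.1 p.2 - c‖ • f (circleMap c p.1 p.2))
      (fun p ↦ (p.1 * k p.1) • f (circleMap c p.1 p.2)) (Ioo 0 τ ×ˢ Ioo (-π) π) := fun p hp ↦ by
    simp only [circleMap_sub_center, norm_circleMap_zero, abs_of_pos hp.1.1, smul_smul]
  have hmeas : MeasurableSet (Ioo 0 τ ×ˢ Ioo (-π) π) := measurableSet_Ioo.prod measurableSet_Ioo
  have hint : IntegrableOn (fun p : ℝ × ℝ ↦ (p.1 * k p.1) • f (circleMap c p.1 p.2))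
      (Ioo 0 τ ×ˢ Ioo (-π) π) := by
    refine Integrable.smul_bdd ?_ C hcont.aestronglyMeasurable
      (ae_restrict_of_forall_mem hmeas fun p hp ↦
        hC p ⟨Ioo_subset_Icc_self hp.1, Ioo_subset_Icc_self hp.2⟩)
    rw [Measure.volume_eq_prod, ← Measure.prod_restrict]
    exact hk.comp_fst _
  rw [setIntegral_ball_eq_integral_circleMap, setIntegral_congr_fun hmeas hpolar,
    Measure.volume_eq_prod, setIntegral_prod _ hint, ← integral_smul]
  simp only [integral_smul, integral_circleMap_eq_circleAverage, smul_comm (2 * π)]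

/-- Poisson's integral for the planar wave equation: as a function of `x` and `τ ≥ 0`, the solution
of `u_ττ = Δu` with initial data `u = 0`, `u_τ = f` at `τ = 0`. It is stated on any normed space `V`
with a measure, but has this meaning only for a Euclidean plane with its area measure. -/
noncomputable def wavePoissonIntegral {V : Type*} [NormedAddCommGroup V] [MeasureSpace V]
    (f : V → E) (x : V) (τ : ℝ) : E :=
  (2 * π)⁻¹ • ∫ y in Metric.ball x τ, (√(τ ^ 2 - ‖y - x‖ ^ 2))⁻¹ • f y

theorem wavePoissonIntegral_eq_abelTransform {f : ℂ → E} (hf : Continuous f) (c : ℂ) {τ : ℝ}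
    (hτ : 0 ≤ τ) : wavePoissonIntegral f c τ = abelTransform (circleAverage f c) τ := by
  rcases hτ.eq_or_lt with rfl | hτ
  · simp [wavePoissonIntegral, abelTransform_zero]
  · rw [wavePoissonIntegral, setIntegral_ball_norm_sub_smul (k := fun r ↦ (√(τ ^ 2 - r ^ 2))⁻¹)
      (integrableOn_div_sqrt_sub_sq τ) hf c, inv_smul_smul₀ two_pi_pos.ne',
      ← integral_Ioc_eq_integral_Ioo, ← intervalIntegral.integral_of_le hτ.le]
    exact integral_sqrt_sub_sq_eq_abelTransform _ hτ

theorem wavePoissonIntegral_complex_of_laplacian_eq [CompleteSpace E] {ω : ℝ} (hω : ω ≠ 0)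
    {f : ℂ → E} (hf : ContDiff ℝ 2 f) (hΔ : Δ f = -ω ^ 2 • f) (c : ℂ) {τ : ℝ} (hτ : 0 ≤ τ) :
    wavePoissonIntegral f c τ = (sin (ω * τ) / ω) • f c := by
  have hM : ContDiff ℝ 2 (circleAverage f c) := contDiff_circleAverage (n := 2) hf c
  have hΔM : abelTransform (circleAverage (Δ f) c) =
      -ω ^ 2 • abelTransform (circleAverage f c) := by
    rw [hΔ, ← abelTransform_const_smul]
    congr 1
    ext r
    exact circleAverage_smul
  have hoscillator := eq_cos_smul_add_sin_smul_of_hasDerivAt hω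
    (hasDerivAt_abelTransform (hM.of_le one_le_two)) (fun t ↦ ?_) τ
  · rw [wavePoissonIntegral_eq_abelTransform hf.continuous c hτ, hoscillator]
    simp [abelTransform_zero]
  · rw [← Pi.smul_apply, ← hΔM]
    exact (hasDerivAt_smul_integral_deriv_comp_mul_sin hM
      (smul_deriv_deriv_circleAverage_add_deriv hf c) t).const_add _

section Isometry

variable {V W : Type*} [NormedAddCommGroup V] [InnerProductSpace ℝ V] [FiniteDimensional ℝ V]
  [NormedAddCommGroup W] [InnerProductSpace ℝ W] [FiniteDimensional ℝ W]

theorem laplacian_comp_linearIsometryEquiv (f : V → E) (L : W ≃ₗᵢ[ℝ] V) :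
    Δ (f ∘ L) = Δ f ∘ L := by
  have hcomp (w : W) : iteratedFDeriv ℝ 2 (f ∘ L) w =
      (iteratedFDeriv ℝ 2 f (L w)).compContinuousLinearMap fun _ ↦ L := by
    simpa only [iteratedFDerivWithin_univ, preimage_univ] using!
      L.toContinuousLinearEquiv.iteratedFDerivWithin_comp_right f uniqueDiffOn_univ
        (mem_univ w) 2
  rw [InnerProductSpace.laplacian_eq_iteratedFDeriv_stdOrthonormalBasis,
    InnerProductSpace.laplacian_eq_iteratedFDeriv_orthonormalBasis f
      ((stdOrthonormalBasis ℝ W).map L)]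
  ext w
  simp only [hcomp, Function.comp_apply, OrthonormalBasis.map_apply,
    ContinuousMultilinearMap.compContinuousLinearMap_apply]
  refine Finset.sum_congr rfl fun i _ ↦ congrArg (iteratedFDeriv ℝ 2 f (L w)) (funext fun j ↦ ?_)
  fin_cases j <;> rfl

variable [MeasurableSpace V] [BorelSpace V] [MeasurableSpace W] [BorelSpace W]

theorem wavePoissonIntegral_comp_linearIsometryEquiv (f : V → E) (L : W ≃ₗᵢ[ℝ] V) (w : W)
    (τ : ℝ) :
    wavePoissonIntegral (f ∘ L) w τ = wavePoissonIntegral f (L w) τ := by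
  rw [wavePoissonIntegral, wavePoissonIntegral, ← L.measurePreserving.setIntegral_preimage_emb
    L.toHomeomorph.measurableEmbedding, L.preimage_ball, L.symm_apply_apply]
  simp only [← map_sub, L.norm_map, Function.comp_apply]

theorem wavePoissonIntegral_of_laplacian_eq [CompleteSpace E] (hV : Module.finrank ℝ V = 2)
    {ω : ℝ} (hω : ω ≠ 0) {f : V → E} (hf : ContDiff ℝ 2 f) (hΔ : Δ f = -ω ^ 2 • f) (x : V)
    {τ : ℝ} (hτ : 0 ≤ τ) :
    wavePoissonIntegral f x τ = (sin (ω * τ) / ω) • f x := by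
  let L := Complex.isometryOfOrthonormal ((stdOrthonormalBasis ℝ V).reindex (finCongr hV))
  have hcomplex := wavePoissonIntegral_complex_of_laplacian_eq hω (hf.comp L.contDiff)
    (by rw [laplacian_comp_linearIsometryEquiv, hΔ]; rfl) (L.symm x) hτ
  rwa [wavePoissonIntegral_comp_linearIsometryEquiv, Function.comp_apply,
    L.apply_symm_apply] at hcomplex

theorem duhamel_formula_2d_general [CompleteSpace E] (hV : Module.finrank ℝ V = 2) {lam : ℝ}
    (hlam : 0 < lam) {φ : V → E} (hφ : ContDiff ℝ 2 φ) (heig : Δ φ = -lam • φ) (x : V)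
    {t : ℝ} (ht : 0 ≤ t) :
    ∫ s in 0..t, wavePoissonIntegral φ x (t - s) = ((1 - cos (√lam * t)) / lam) • φ x := by
  have hω : √lam ≠ 0 := (sqrt_pos.2 hlam).ne'
  rw [intervalIntegral.integral_comp_sub_left (wavePoissonIntegral φ x), sub_self, sub_zero]
  calc ∫ τ in 0..t, wavePoissonIntegral φ x τ
      = ∫ τ in 0..t, (sin (√lam * τ) / √lam) • φ x := by
        refine intervalIntegral.integral_congr fun τ hτ ↦ ?_
        rw [uIcc_of_le ht] at hτ
        exact wavePoissonIntegral_of_laplacian_eq hV hω hφ (by rwa [sq_sqrt hlam.le]) x hτ.1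
    _ = ((1 - cos (√lam * t)) / lam) • φ x := by
        rw [intervalIntegral.integral_smul_const, intervalIntegral.integral_div,
          intervalIntegral.integral_comp_mul_left sin hω, integral_sin, mul_zero, cos_zero,
          smul_eq_mul, inv_mul_eq_div, div_div, mul_self_sqrt hlam.le]

end Isometry

theorem euclidLaplacian_eq_laplacian {d : ℕ} {f : EuclideanSpace ℝ (Fin d) → ℝ}
    (hf : ContDiff ℝ 2 f) : euclidLaplacian f = Δ f := by
  ext x
  have hDf : Differentiable ℝ (fderiv ℝ f) :=
    (hf.fderiv_right (m := 1) (by norm_num)).differentiable one_ne_zero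
  rw [InnerProductSpace.laplacian_eq_iteratedFDeriv_orthonormalBasis f
    (EuclideanSpace.basisFun (Fin d) ℝ), euclidLaplacian]
  refine Finset.sum_congr rfl fun i _ ↦ ?_
  rw [iteratedFDeriv_two_apply, fderiv_clm_apply (hDf x) (differentiableAt_const _)]
  simp

end

/-- For a smooth global eigenfunction `−Δφ = λφ` on `ℝ²`, Duhamel's solution formula
for the inhomogeneous wave equation `u_tt − Δu = φ` with vanishing initial data
evaluates to `((1 − cos(√λ·t))/λ)·φ(x)`. -/
theorem duhamel_formula_2d (lam : ℝ) (hlam : 0 < lam)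
    (φ : EuclideanSpace ℝ (Fin 2) → ℝ) (hφ : ContDiff ℝ (⊤ : ℕ∞) φ)
    (heig : ∀ x, euclidLaplacian φ x = -lam * φ x)
    (x : EuclideanSpace ℝ (Fin 2)) (t : ℝ) (ht : 0 ≤ t) :
    ∫ s in (0 : ℝ)..t, (1 / (2 * π)) *
        ∫ y in Metric.ball x (t - s), φ y / Real.sqrt ((t - s) ^ 2 - ‖y - x‖ ^ 2) =
      ((1 - Real.cos (Real.sqrt lam * t)) / lam) * φ x := by
  have hφ₂ : ContDiff ℝ 2 φ := mod_cast contDiff_infty.1 hφ 2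
  simpa only [wavePoissonIntegral, smul_eq_mul, one_div, mul_one, div_eq_inv_mul] using
    duhamel_formula_2d_general finrank_euclideanSpace_fin hlam hφ₂
      (euclidLaplacian_eq_laplacian hφ₂ ▸ funext heig) x ht
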